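/- For i, j ≥ 1, the number of synchronized Tamari intervals with exactly i canopy entries equal to 1 and j canopy entries equal to 0 equals (1/(ij)) · C(2i+j-2, j-1) · C(2j+i-2, i-1). -/

import Mathlib

/-- Binary trees: a leaf or a binary node with two subtrees. -/
inductive BT : Type
  | leaf : BT
  | node : BT → BT → BT

namespace BT

/-- Number of binary (internal) nodes. -/
def size : BT → ℕ
  | leaf => 0
  | node l r => l.size + r.size + 1

/-- One right rotation somewhere in the tree: ((A,B),C) ↦ (A,(B,C)). -/
inductive Rot : BT → BT → Prop
  | rotate (A B C : BT) : Rot (node (node A B) C) (node A (node B C))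
  | left {l l' : BT} (r : BT) : Rot l l' → Rot (node l r) (node l' r)
  | right (l : BT) {r r' : BT} : Rot r r' → Rot (node l r) (node l r')

/-- Tamari order: reflexive-transitive closure of right rotation. -/
def tle (T T' : BT) : Prop := Relation.ReflTransGen Rot T T'

/-- Bracket-vector: sizes of right subtrees of nodes, in infix order. -/
def bracket : BT → List ℕ
  | leaf => []
  | node l r => bracket l ++ r.size :: bracket r

/-- Dual bracket-vector: sizes of left subtrees of nodes, in infix order. -/
def dualBracket : BT → List ℕ
  | leaf => []
  | node l r => dualBracket l ++ l.size :: dualBracket r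

/-- Canopy word: for each leaf (left to right), 1 if it is a left child, 0 if a right child;
the argument `b` is the value assigned to the tree if it is itself a leaf. -/
def canopyAux (b : ℕ) : BT → List ℕ
  | leaf => [b]
  | node l r => canopyAux 1 l ++ canopyAux 0 r

/-- Canopy-vector of a binary tree. -/
def canopy (T : BT) : List ℕ := canopyAux 1 T

/-- Left-right mirror. -/
def mir : BT → BT
  | leaf => leaf
  | node l r => node (mir r) (mir l)

/-- Tamari interval of size n. -/
def interval (p : BT × BT) (n : ℕ) : Prop :=
  p.1.size = n ∧ p.2.size = n ∧ tle p.1 p.2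

/-- Tamari interval (of unspecified size). -/
def isInt (p : BT × BT) : Prop := p.1.size = p.2.size ∧ tle p.1 p.2

/-- The rise operation (T,T') ↦ ((T,ε),(ε,T')). -/
def riseF (p : BT × BT) : BT × BT := (node p.1 leaf, node leaf p.2)

/-- An interval is modern when its rise is again an interval. -/
def modern (p : BT × BT) : Prop := tle (node p.1 leaf) (node leaf p.2)

/-- Infinitely modern: every iterated rise is an interval. -/
def infModern (p : BT × BT) : Prop :=
  ∀ k : ℕ, tle ((riseF^[k] p).1) ((riseF^[k] p).2)

/-- Synchronized: equal canopies. -/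
def synced (p : BT × BT) : Prop := canopy p.1 = canopy p.2

/-- Self-dual: equal to its dual (mir T', mir T). -/
def selfDual (p : BT × BT) : Prop := mir p.2 = p.1 ∧ mir p.1 = p.2

/-- Number of positions where the two canopies agree. -/
def agreeCount (p : BT × BT) : ℕ :=
  ((List.range (p.1.size + 1)).filter
    (fun i => (canopy p.1).getD i 0 == (canopy p.2).getD i 0)).length

/-- Number of canopy positions of joint type (a on top, b on bottom), for an interval (T,T')
with T' the upper tree. -/
def typeCount (a b : ℕ) (p : BT × BT) : ℕ :=
  ((List.range (p.1.size + 1)).filter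
    (fun i => ((canopy p.2).getD i 0 == a) && ((canopy p.1).getD i 0 == b))).length

end BT

/-!
The trees below `node L R` in the Tamari order are those obtained from some `A` below `L` and `B`
below `R` by grafting `A` onto a place of the left branch of `B`. An interval therefore decomposes
into two smaller ones and a depth, and it is synchronized exactly when both parts are and the depth
does not displace the first leaf of `B`. With the length of the left branch as catalytic variable,
this gives a polynomial equation for the generating function. That equation is solved explicitly
over the parametrization `U (1 - V) ^ 2 = t`, `V (1 - U) ^ 2 = t v`, where `t` marks the size and
`v` the zeros of the canopy: the generating function `G` of synchronized intervals satisfies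
`t (G - 1) = U V (1 - U - V)`. The binomial coefficients of the count are then read off by
Lagrange-Good inversion, which is proved by checking that the series with the expected coefficients
obey the same recurrences as the monomials `U ^ a V ^ b`, up to a common factor.
-/
namespace BT

/-! ### Lower sets of the Tamari order and synchronized intervals -/

/-- The number of nodes on the left branch, that is, the left-depth of the first leaf. -/
def leftDepth : BT → ℕ
  | leaf => 0
  | node l _ => l.leftDepth + 1

/-- Walk down `d` steps along the left branch of `B`, stopping early at the first leaf, and put
there a node whose left subtree is `A` and whose right subtree is the subtree of `B` found at that
place. Undoing rotations at the root of `node A B` produces exactly these trees. -/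
def graft (A : BT) : BT → ℕ → BT
  | node l r, d + 1 => node (graft A l d) r
  | B, _ => node A B

/-- The number of depths at which grafting onto `B` preserves synchronization: the places strictly
above the first leaf of `B`, and depth `0` even if `B` is a leaf. -/
def graftDepths (B : BT) : ℕ := max 1 B.leftDepth

@[simp] theorem graft_zero (A B : BT) : graft A B 0 = node A B := by cases B <;> rfl

@[simp] theorem graft_leaf (A : BT) (d : ℕ) : graft A leaf d = node A leaf := by cases d <;> rfl

@[simp] theorem graft_node_succ (A l r : BT) (d : ℕ) :
    graft A (node l r) (d + 1) = node (graft A l d) r := rfl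

theorem graft_min_leftDepth (A : BT) : ∀ (B : BT) (d : ℕ),
    graft A B (min d B.leftDepth) = graft A B d
  | leaf, d => by simp
  | node l r, 0 => by simp
  | node l r, d + 1 => by simp [leftDepth, graft_min_leftDepth A l d]

theorem size_graft (A : BT) : ∀ (B : BT) (d : ℕ), (graft A B d).size = A.size + B.size + 1
  | leaf, d => by simp [size]
  | node l r, 0 => by simp [size]
  | node l r, d + 1 => by simp only [graft_node_succ, size, size_graft A l d]; omega

theorem leftDepth_graft (A : BT) : ∀ {B : BT} {d : ℕ}, d ≤ B.leftDepth →
    (graft A B d).leftDepth = A.leftDepth + 1 + d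
  | leaf, d, h => by simp_all [leftDepth]
  | node l r, 0, _ => by simp [leftDepth]
  | node l r, d + 1, h => by
    simp [leftDepth, leftDepth_graft A (B := l) (d := d) (by simpa [leftDepth] using h), add_assoc]

theorem le_leftDepth_of_lt_graftDepths {B : BT} {d : ℕ} (h : d < B.graftDepths) :
    d ≤ B.leftDepth := by
  grind [graftDepths]

theorem graft_inj {A A' : BT} (hA : A.size = A'.size) : ∀ {B B' : BT} {d d' : ℕ},
    d ≤ B.leftDepth → d' ≤ B'.leftDepth → graft A B d = graft A' B' d' →
      A = A' ∧ B = B' ∧ d = d'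
  | _, _, 0, 0, _, _, h => by simpa using h
  | B, node l r, 0, d' + 1, _, _, h => by
    simp only [graft_zero, graft_node_succ, node.injEq] at h
    have hsize : A.size = A'.size + l.size + 1 := by rw [h.1, size_graft]
    omega
  | node l r, B', d + 1, 0, _, _, h => by
    simp only [graft_zero, graft_node_succ, node.injEq] at h
    have hsize : A'.size = A.size + l.size + 1 := by rw [← h.1, size_graft]
    omega
  | node l r, node l' r', d + 1, d' + 1, hd, hd', h => by
    simp only [graft_node_succ, node.injEq] at h
    obtain ⟨rfl, rfl, rfl⟩ := graft_inj hA (Nat.le_of_succ_le_succ hd)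
      (Nat.le_of_succ_le_succ hd') h.1
    exact ⟨rfl, by rw [h.2], rfl⟩

theorem Rot.size_eq {T T' : BT} (h : Rot T T') : T.size = T'.size := by
  induction h <;> simp only [size] at * <;> omega

theorem tle.size_eq {T T' : BT} (h : tle T T') : T.size = T'.size := by
  induction h with
  | refl => rfl
  | tail _ h ih => exact ih.trans h.size_eq

theorem tle.node_left {l l' : BT} (h : tle l l') (r : BT) : tle (node l r) (node l' r) :=
  Relation.ReflTransGen.lift (fun l => node l r) (fun _ _ h => Rot.left r h) _ _ h

theorem tle.node_right {r r' : BT} (h : tle r r') (l : BT) : tle (node l r) (node l r') :=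
  Relation.ReflTransGen.lift (fun r => node l r) (fun _ _ h => Rot.right l h) _ _ h

theorem graft_tle (A : BT) : ∀ (B : BT) (d : ℕ), tle (graft A B d) (node A B)
  | leaf, d => by rw [graft_leaf]; exact .refl
  | node l r, 0 => by rw [graft_zero]; exact .refl
  | node l r, d + 1 => ((graft_tle A l d).node_left r).tail (Rot.rotate A l r)

theorem exists_graft_of_rot_node {T A B : BT} (h : Rot T (node A B)) :
    ∃ A' B' d, T = graft A' B' d ∧ tle A' A ∧ tle B' B := by
  cases h with
  | rotate _ B C => exact ⟨A, node B C, 1, by simp, .refl, .refl⟩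
  | @left l _ _ h => exact ⟨l, B, 0, by simp, .single h, .refl⟩
  | @right _ r _ h => exact ⟨A, r, 0, by simp, .refl, .single h⟩

theorem exists_graft_of_rot_graft (A : BT) : ∀ (B : BT) (d : ℕ) {T : BT}, Rot T (graft A B d) →
    ∃ A' B' d', T = graft A' B' d' ∧ tle A' A ∧ tle B' B
  | leaf, d, T, h => exists_graft_of_rot_node (graft_leaf A d ▸ h)
  | node l r, 0, T, h => exists_graft_of_rot_node (graft_zero A (node l r) ▸ h)
  | node l r, d + 1, T, h => by
    rw [graft_node_succ] at h
    cases h with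
    | rotate _ B C =>
      exact ⟨A, node (node l B) C, d + 2, by simp, .refl, .single (Rot.rotate _ _ _)⟩
    | @left l₀ _ _ h =>
      obtain ⟨A', B', d', rfl, hA, hB⟩ := exists_graft_of_rot_graft A l d h
      exact ⟨A', node B' r, d' + 1, by simp, hA, hB.node_left r⟩
    | @right _ r₀ _ h =>
      exact ⟨A, node l r₀, d + 1, by simp, .refl, .single (Rot.right l h)⟩

theorem tle_node_iff {T L R : BT} :
    tle T (node L R) ↔ ∃ A B d, T = graft A B d ∧ tle A L ∧ tle B R := by
  constructor
  · intro h
    induction h using Relation.ReflTransGen.head_induction_on with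
    | refl => exact ⟨L, R, 0, by simp, .refl, .refl⟩
    | head h _ ih =>
      obtain ⟨A, B, d, rfl, hA, hB⟩ := ih
      obtain ⟨A', B', d', rfl, hA', hB'⟩ := exists_graft_of_rot_graft A B d h
      exact ⟨A', B', d', rfl, hA'.trans hA, hB'.trans hB⟩
  · rintro ⟨A, B, d, rfl, hA, hB⟩
    exact (graft_tle A B d).trans ((hA.node_left B).trans (hB.node_right L))

theorem length_canopyAux : ∀ (b : ℕ) (T : BT), (canopyAux b T).length = T.size + 1
  | b, leaf => rfl
  | b, node l r => by
    simp only [canopyAux, List.length_append, length_canopyAux, size]; omega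

theorem exists_canopyAux_one_eq_cons : ∀ T : BT, ∃ w, canopyAux 1 T = 1 :: w
  | leaf => ⟨[], rfl⟩
  | node l r => by
    obtain ⟨w, hw⟩ := exists_canopyAux_one_eq_cons l
    exact ⟨w ++ canopyAux 0 r, by simp [canopyAux, hw]⟩

theorem count_one_add_count_zero_canopyAux : ∀ {b : ℕ} (T : BT), b = 0 ∨ b = 1 →
    (canopyAux b T).count 1 + (canopyAux b T).count 0 = T.size + 1
  | b, leaf, h => by rcases h with rfl | rfl <;> rfl
  | b, node l r, _ => by
    have hl := count_one_add_count_zero_canopyAux (b := 1) l (.inr rfl)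
    have hr := count_one_add_count_zero_canopyAux (b := 0) r (.inl rfl)
    simp only [canopyAux, List.count_append, size]
    omega

theorem canopyAux_zero_eq_iff {B R : BT} (h : B.size = R.size) :
    canopyAux 0 B = canopyAux 0 R ↔ canopy B = canopy R := by
  cases B <;> cases R <;> simp_all [canopy, canopyAux, size]

theorem canopyAux_graft_of_lt (b : ℕ) (A : BT) : ∀ {B : BT} {d : ℕ}, d < B.graftDepths →
    canopyAux b (graft A B d) = canopyAux 1 A ++ canopyAux 0 B
  | leaf, d, _ => by simp [canopyAux]
  | node l r, 0, _ => by simp [canopyAux]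
  | node leaf r, d + 1, h => by simp [graftDepths, leftDepth] at h
  | node (node l l') r, d + 1, h => by
    have hd : d < (node l l').graftDepths := by simp_all [graftDepths, leftDepth]
    simp [canopyAux, canopyAux_graft_of_lt 1 A hd]

theorem canopyAux_graft_leftDepth (b : ℕ) (A : BT) : ∀ B : BT,
    canopyAux b (graft A B B.leftDepth) = canopyAux 1 A ++ 0 :: (canopyAux 1 B).tail
  | leaf => by simp [canopyAux]
  | node l r => by
    obtain ⟨w, hw⟩ := exists_canopyAux_one_eq_cons l
    simp [leftDepth, canopyAux, canopyAux_graft_leftDepth 1 A l, hw]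

/-- The pair of trees assembled from the pairs `p` and `q`. Every interval other than `(ε, ε)` is
assembled from two smaller ones, by the description of the lower sets in `tle_node_iff`. -/
def build (p q : BT × BT) (d : ℕ) : BT × BT := (graft p.1 q.1 d, node p.2 q.2)

theorem size_build (p q : BT × BT) (d : ℕ) :
    (build p q d).1.size = p.1.size + q.1.size + 1 := size_graft _ _ _

theorem isInt_iff_tle {p : BT × BT} : isInt p ↔ tle p.1 p.2 :=
  ⟨And.right, fun h => ⟨h.size_eq, h⟩⟩

theorem eq_leaf_of_size_eq_zero {T : BT} (h : T.size = 0) : T = leaf := by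
  cases T <;> simp_all [size]

theorem isInt.build {p q : BT × BT} (hp : isInt p) (hq : isInt q) (d : ℕ) :
    isInt (build p q d) :=
  isInt_iff_tle.2 (tle_node_iff.2 ⟨_, _, d, rfl, hp.2, hq.2⟩)

theorem isInt.eq_leaf_or_eq_build {p : BT × BT} (h : isInt p) : p = (leaf, leaf) ∨
    ∃ q r d, isInt q ∧ isInt r ∧ d ≤ r.1.leftDepth ∧ p = BT.build q r d := by
  obtain ⟨T, leaf | ⟨L, R⟩⟩ := p
  · exact .inl (Prod.ext (eq_leaf_of_size_eq_zero h.1) rfl)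
  · obtain ⟨A, B, d, hT, hA, hB⟩ := tle_node_iff.1 h.2
    refine .inr ⟨(A, L), (B, R), min d B.leftDepth, isInt_iff_tle.2 hA, isInt_iff_tle.2 hB,
      min_le_right _ _, Prod.ext ?_ rfl⟩
    simpa [BT.build, graft_min_leftDepth] using hT

theorem build_inj {p q p' q' : BT × BT} {d d' : ℕ} (hp : isInt p) (hp' : isInt p')
    (hd : d ≤ q.1.leftDepth) (hd' : d' ≤ q'.1.leftDepth) (h : build p q d = build p' q' d') :
    p = p' ∧ q = q' ∧ d = d' := by
  simp only [build, Prod.mk.injEq, node.injEq] at h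
  obtain ⟨hgraft, hp₂, hq₂⟩ := h
  obtain ⟨hp₁, hq₁, rfl⟩ := graft_inj (by rw [hp.1, hp'.1, hp₂]) hd hd' hgraft
  exact ⟨Prod.ext hp₁ hp₂, Prod.ext hq₁ hq₂, rfl⟩

theorem synced_build_iff {p q : BT × BT} {d : ℕ} (hp : p.1.size = p.2.size)
    (hq : q.1.size = q.2.size) (hd : d < q.1.graftDepths) :
    synced (build p q d) ↔ synced p ∧ synced q := by
  have hlen : (canopyAux 1 p.1).length = (canopyAux 1 p.2).length := by
    rw [length_canopyAux, length_canopyAux, hp]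
  rw [synced, build, canopy, canopy, canopyAux_graft_of_lt 1 p.1 hd, canopyAux,
    List.append_eq_append_iff_of_size_eq_left hlen, canopyAux_zero_eq_iff hq]
  rfl

/-- A graft at the bottom of the left branch turns the first leaf of `q.1` into a right child. -/
theorem lt_graftDepths_of_synced_build {p q : BT × BT} {d : ℕ} (hp : p.1.size = p.2.size)
    (hq : q.1.size = q.2.size) (hd : d ≤ q.1.leftDepth) (h : synced (build p q d)) :
    d < q.1.graftDepths := by
  by_contra! hle
  obtain rfl : d = q.1.leftDepth := by grind [graftDepths]
  have hlen : (canopyAux 1 p.1).length = (canopyAux 1 p.2).length := by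
    rw [length_canopyAux, length_canopyAux, hp]
  rw [synced, build, canopy, canopy, canopyAux_graft_leftDepth, canopyAux,
    List.append_eq_append_iff_of_size_eq_left hlen] at h
  obtain ⟨B, leaf | ⟨l, r⟩⟩ := q
  · obtain rfl := eq_leaf_of_size_eq_zero hq
    simp [graftDepths, leftDepth] at hle
  · obtain ⟨w, hw⟩ := exists_canopyAux_one_eq_cons (node l r)
    have hcanopy : canopyAux 0 (node l r) = 1 :: w := hw
    simp [hcanopy] at h

/-- Synchronized Tamari intervals, of any size. -/
def IsSyncInterval (p : BT × BT) : Prop := isInt p ∧ synced p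

theorem isSyncInterval_leaf : IsSyncInterval (leaf, leaf) := ⟨⟨rfl, .refl⟩, rfl⟩

theorem IsSyncInterval.build {p q : BT × BT} {d : ℕ} (hp : IsSyncInterval p)
    (hq : IsSyncInterval q) (hd : d < q.1.graftDepths) : IsSyncInterval (build p q d) :=
  ⟨hp.1.build hq.1 d, (synced_build_iff hp.1.1 hq.1.1 hd).2 ⟨hp.2, hq.2⟩⟩

theorem IsSyncInterval.eq_leaf_or_eq_build {p : BT × BT} (h : IsSyncInterval p) :
    p = (leaf, leaf) ∨ ∃ q r d,
      IsSyncInterval q ∧ IsSyncInterval r ∧ d < r.1.graftDepths ∧ p = BT.build q r d := by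
  obtain rfl | ⟨q, r, d, hq, hr, hle, rfl⟩ := h.1.eq_leaf_or_eq_build
  · exact .inl rfl
  · have hd := lt_graftDepths_of_synced_build hq.1 hr.1 hle h.2
    have hsync := (synced_build_iff hq.1 hr.1 hd).1 h.2
    exact .inr ⟨q, r, d, ⟨hq, hsync.1⟩, ⟨hr, hsync.2⟩, hd, rfl⟩

theorem finite_size_le (n : ℕ) : {T : BT | T.size ≤ n}.Finite := by
  induction n with
  | zero =>
    exact (Set.finite_singleton leaf).subset fun T hT => eq_leaf_of_size_eq_zero (Nat.le_zero.1 hT)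
  | succ n ih =>
    refine ((Set.finite_singleton leaf).union (ih.image2 node ih)).subset ?_
    rintro (_ | ⟨l, r⟩) hT
    · exact .inl rfl
    · simp only [size, Set.mem_ofPred_eq] at hT
      exact .inr ⟨l, by simp only [Set.mem_ofPred_eq]; omega, r,
        by simp only [Set.mem_ofPred_eq]; omega, rfl⟩

theorem finite_isSyncInterval_size_eq (n : ℕ) :
    {p : BT × BT | IsSyncInterval p ∧ p.1.size = n}.Finite := by
  refine ((finite_size_le n).prod (finite_size_le n)).subset ?_
  rintro p ⟨h, rfl⟩
  exact ⟨le_refl p.1.size, h.1.1.ge⟩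

/-- The finite set of synchronized Tamari intervals of size `n`. -/
noncomputable def syncIntervals (n : ℕ) : Finset (BT × BT) :=
  (finite_isSyncInterval_size_eq n).toFinset

theorem mem_syncIntervals {n : ℕ} {p : BT × BT} :
    p ∈ syncIntervals n ↔ IsSyncInterval p ∧ p.1.size = n := by
  simp [syncIntervals]

theorem syncIntervals_zero : syncIntervals 0 = {(leaf, leaf)} := by
  ext p
  rw [mem_syncIntervals, Finset.mem_singleton]
  constructor
  · rintro ⟨h, hsize⟩
    exact Prod.ext (eq_leaf_of_size_eq_zero hsize) (eq_leaf_of_size_eq_zero (h.1.1 ▸ hsize))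
  · rintro rfl
    exact ⟨isSyncInterval_leaf, rfl⟩

theorem sum_syncIntervals_succ {M : Type*} [AddCommMonoid M] (f : BT × BT → M) (n : ℕ) :
    ∑ p ∈ syncIntervals (n + 1), f p = ∑ mr ∈ Finset.HasAntidiagonal.antidiagonal n,
      ∑ pq ∈ syncIntervals mr.1 ×ˢ syncIntervals mr.2,
        ∑ d ∈ Finset.range pq.2.1.graftDepths, f (build pq.1 pq.2 d) := by
  simp only [Finset.sum_sigma']
  symm
  refine Finset.sum_nbij (fun y => build y.2.1.1 y.2.1.2 y.2.2) ?_ ?_ ?_ fun _ _ => rfl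
  · rintro ⟨⟨m, r⟩, ⟨p, q⟩, d⟩ h
    simp only [Finset.mem_sigma, Finset.HasAntidiagonal.mem_antidiagonal, Finset.mem_product,
      mem_syncIntervals, Finset.mem_range] at h ⊢
    obtain ⟨hmr, ⟨⟨hp, hm⟩, hq, hr⟩, hd⟩ := h
    exact ⟨hp.build hq hd, by rw [size_build, hm, hr, hmr]⟩
  · rintro ⟨⟨m, r⟩, ⟨p, q⟩, d⟩ h ⟨⟨m', r'⟩, ⟨p', q'⟩, d'⟩ h' hbuild
    simp only [Finset.mem_coe, Finset.mem_sigma, Finset.HasAntidiagonal.mem_antidiagonal,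
      Finset.mem_product, mem_syncIntervals, Finset.mem_range] at h h'
    obtain ⟨-, ⟨⟨hp, rfl⟩, -, rfl⟩, hd⟩ := h
    obtain ⟨-, ⟨⟨hp', rfl⟩, -, rfl⟩, hd'⟩ := h'
    obtain ⟨rfl, rfl, rfl⟩ := build_inj hp.1 hp'.1 (le_leftDepth_of_lt_graftDepths hd)
      (le_leftDepth_of_lt_graftDepths hd') hbuild
    rfl
  · intro p hp
    obtain ⟨hp, hsize⟩ := mem_syncIntervals.1 hp
    obtain rfl | ⟨q, r, d, hq, hr, hd, rfl⟩ := hp.eq_leaf_or_eq_build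
    · simp [size] at hsize
    · refine ⟨⟨(q.1.size, r.1.size), (q, r), d⟩, ?_, rfl⟩
      have hadd : q.1.size + r.1.size = n := by rw [size_build] at hsize; omega
      simp [mem_syncIntervals, hq, hr, hd, hadd]

end BT

namespace TamariSeries

open PowerSeries

/-! ### The catalytic equation -/

section CatalyticEquation

variable {A B : Type*} [CommRing A] [CommRing B]

theorem eq_zero_of_forall_X_pow_dvd {a : A⟦X⟧} (h : ∀ n, (X : A⟦X⟧) ^ n ∣ a) : a = 0 := by
  ext n
  exact X_pow_dvd_iff.1 (h (n + 1)) n n.lt_succ_self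

theorem isUnit_of_X_dvd_sub_one {a : A⟦X⟧} (h : X ∣ a - 1) : IsUnit a := by
  rw [isUnit_iff_constantCoeff, show constantCoeff a = 1 by
    simpa [X_dvd_iff, sub_eq_zero] using h]
  exact isUnit_one

theorem isUnit_one_sub_of_X_dvd {a : A⟦X⟧} (h : X ∣ a) : IsUnit (1 - a) :=
  isUnit_of_X_dvd_sub_one (by simpa using h)

theorem exists_isRoot_of_X_dvd_eval {f : Polynomial A⟦X⟧} (hf : f.Monic) {a₀ : A⟦X⟧}
    (h : X ∣ f.eval a₀) (h' : IsUnit (f.derivative.eval a₀)) :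
    ∃ a, f.eval a = 0 ∧ X ∣ a - a₀ := by
  obtain ⟨a, ha, haa₀⟩ := HenselianRing.is_henselian (I := Ideal.span {(X : A⟦X⟧)}) f hf a₀
    (Ideal.mem_span_singleton.2 h) (h'.map _)
  exact ⟨a, ha, Ideal.mem_span_singleton.1 haa₀⟩

theorem exists_eq_one_add_mul_add_mul_sq {c d : A⟦X⟧} (hc : X ∣ c) (hd : X ∣ d) :
    ∃ N, N = 1 + c * N + d * N ^ 2 := by
  let f : Polynomial A⟦X⟧ := .X ^ 2 - .C (1 - c) * .X + .C d
  have hf : f.Monic := by unfold f; monicity!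
  -- The inverse of a solution is a root of the reciprocal, monic, polynomial.
  obtain ⟨R, hR, hR1⟩ := exists_isRoot_of_X_dvd_eval hf (a₀ := 1)
    (by simpa [f] using dvd_add hc hd)
    (isUnit_of_X_dvd_sub_one (by
      rwa [show f.derivative.eval 1 - 1 = c by simp [f]]))
  obtain ⟨N, hN⟩ := (isUnit_of_X_dvd_sub_one hR1).exists_right_inv
  refine ⟨N, ?_⟩
  have hR' : R ^ 2 - (1 - c) * R + d = 0 := by simpa [f] using hR
  linear_combination (-(1 - c) * N + R * N + 1) * hN - N ^ 2 * hR'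

/-- The system of algebraic equations that parametrizes the generating function of synchronized
intervals: `X` marks the size and `v` the zeros of the canopy. -/
structure IsParametrization (v : A) (U V : A⟦X⟧) : Prop where
  X_dvd_left : X ∣ U
  X_dvd_right : X ∣ V
  left_eq : U * (1 - V) ^ 2 = X
  right_eq : V * (1 - U) ^ 2 = X * C v

theorem exists_isParametrization (v : A) : ∃ U V : A⟦X⟧, IsParametrization v U V := by
  -- Eliminating `U = X / (1 - V) ^ 2` from the system leaves this equation for `V`.
  let f : Polynomial A⟦X⟧ :=
    .X * ((1 - .X) ^ 2 - .C X) ^ 2 - .C (X * C v) * (1 - .X) ^ 4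
  have hf : f.Monic := by unfold f; monicity!
  obtain ⟨V, hV, hXV⟩ := exists_isRoot_of_X_dvd_eval hf (a₀ := 0)
    ⟨-C v, by simp [f]⟩
    (isUnit_of_X_dvd_sub_one ⟨-2 + X + 4 * C v, by simp [f, Polynomial.derivative_pow]; ring⟩)
  rw [sub_zero] at hXV
  have hunit := isUnit_one_sub_of_X_dvd hXV
  obtain ⟨w, hw⟩ := hunit.exists_right_inv
  have hU : X * w ^ 2 * (1 - V) ^ 2 = X := by linear_combination X * ((1 - V) * w + 1) * hw
  refine ⟨X * w ^ 2, V, ⟨w ^ 2, rfl⟩, hXV, hU, (hunit.pow 4).mul_left_cancel ?_⟩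
  have hV' : V * ((1 - V) ^ 2 - X) ^ 2 = X * C v * (1 - V) ^ 4 := by
    simpa [f, sub_eq_zero] using hV
  linear_combination hV' +
    V * (-2 * (1 - V) ^ 2 + X * w ^ 2 * (1 - V) ^ 2 + X) * hU

theorem IsParametrization.map {v : A} {U V : A⟦X⟧} (h : IsParametrization v U V) (f : A →+* B) :
    IsParametrization (f v) (U.map f) (V.map f) where
  X_dvd_left := by simpa using map_dvd (PowerSeries.map f) h.X_dvd_left
  X_dvd_right := by simpa using map_dvd (PowerSeries.map f) h.X_dvd_right
  left_eq := by simpa using congrArg (PowerSeries.map f) h.left_eq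
  right_eq := by simpa using congrArg (PowerSeries.map f) h.right_eq

theorem IsParametrization.exists_mul_sq_eq {v : A} {U V : A⟦X⟧} (h : IsParametrization v U V) :
    ∃ P, P * (1 - V) ^ 2 = 1 - V - U * V := by
  obtain ⟨w, hw⟩ := (isUnit_one_sub_of_X_dvd h.X_dvd_right).exists_right_inv
  exact ⟨w ^ 2 * (1 - V - U * V),
    by linear_combination ((1 - V) * w + 1) * (1 - V - U * V) * hw⟩

/-- Specialization of the catalytic variable at `1`. -/
noncomputable def evalOne : (Polynomial A)⟦X⟧ →+* A⟦X⟧ :=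
  PowerSeries.map (Polynomial.evalRingHom 1)

/-- Inclusion of the series in which the catalytic variable does not occur. -/
noncomputable def constSeries : A⟦X⟧ →+* (Polynomial A)⟦X⟧ :=
  PowerSeries.map Polynomial.C

@[simp] theorem evalOne_constSeries (P : A⟦X⟧) : evalOne (constSeries P) = P := by
  ext n
  simp [evalOne, constSeries]

theorem X_pow_dvd_C_X_sub_one_mul_iff {n : ℕ} {D : (Polynomial A)⟦X⟧} :
    X ^ n ∣ C (Polynomial.X - 1) * D ↔ X ^ n ∣ D := by
  have hregular : IsLeftRegular (Polynomial.X - 1 : Polynomial A) := by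
    simpa using (Polynomial.monic_X_sub_C (1 : A)).isRegular.left
  simp only [X_pow_dvd_iff, coeff_C_mul, hregular.mul_left_eq_zero_iff]

/-- The equation with one catalytic variable `x` (the variable of the coefficient ring
`Polynomial A`) obeyed by the generating function `F` of synchronized intervals, with the unknown
specialization `F(1)` replaced by `P`. The factor `x - 1` of the divided difference
`(F(x) - F(1)) / (x - 1)` has been cleared. -/
def CatalyticEquation (v : A) (P : A⟦X⟧) (F : (Polynomial A)⟦X⟧) : Prop :=
  C (Polynomial.X - 1) * F = C (Polynomial.X - 1) + X * (C Polynomial.X * F *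
    (C (Polynomial.C v * (Polynomial.X - 1)) + F - constSeries P))

theorem CatalyticEquation.eq {v : A} {F G : (Polynomial A)⟦X⟧}
    (hF : CatalyticEquation v (evalOne F) F) (hG : CatalyticEquation v (evalOne G) G) : F = G := by
  refine sub_eq_zero.1 (eq_zero_of_forall_X_pow_dvd fun n => ?_)
  induction n with
  | zero => simp
  | succ n ih =>
    have hspec : X ^ n ∣ constSeries (evalOne F) - constSeries (evalOne G) := by
      simpa [constSeries, evalOne] using map_dvd (constSeries.comp evalOne) ih
    rw [← X_pow_dvd_C_X_sub_one_mul_iff]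
    have hsub : C (Polynomial.X - 1) * (F - G) = X * (C Polynomial.X *
        ((F - G) * (C (Polynomial.C v * (Polynomial.X - 1)) + F - constSeries (evalOne F)) +
          G * ((F - G) - (constSeries (evalOne F) - constSeries (evalOne G))))) := by
      unfold CatalyticEquation at hF hG
      linear_combination hF - hG
    rw [hsub, pow_succ']
    exact mul_dvd_mul_left _ (((ih.mul_right _).add ((ih.sub hspec).mul_left _)).mul_left _)

theorem CatalyticEquation.evalOne_eq {v : A} {P : A⟦X⟧} {F : (Polynomial A)⟦X⟧}
    (h : CatalyticEquation v P F) : evalOne F = P := by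
  have hF : X ^ 1 ∣ F - 1 := by
    rw [← X_pow_dvd_C_X_sub_one_mul_iff, mul_sub, h]
    simp
  have hunit : IsUnit (evalOne F) :=
    isUnit_of_X_dvd_sub_one (by simpa [evalOne] using map_dvd evalOne hF)
  have heval : X * (evalOne F * (evalOne F - P)) = 0 := by
    have hmap := congrArg evalOne h
    simp only [map_mul, map_add, map_sub, evalOne_constSeries] at hmap
    simpa [evalOne, eq_comm] using hmap
  rw [← mul_zero X] at heval
  exact sub_eq_zero.1 (hunit.mul_right_eq_zero.1 (X_mul_cancel heval))

/-- The solution is `N - x U V N ^ 2`, where `N` solves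
`N = 1 + x V (1 - U) N + x U V (1 - V) N ^ 2`. -/
theorem exists_catalyticEquation {v : A} {U V P : A⟦X⟧} (h : IsParametrization v U V)
    (hP : P * (1 - V) ^ 2 = 1 - V - U * V) : ∃ F, CatalyticEquation v P F := by
  have hXP : X * P = U * (1 - V - U * V) := by
    linear_combination U * hP - P * h.left_eq
  replace hXP : X * constSeries P = constSeries (U * (1 - V - U * V)) := by
    simpa [constSeries] using congrArg constSeries hXP
  simp only [map_sub, map_mul, map_one] at hXP
  have h' := h.map (Polynomial.C : A →+* Polynomial A)
  change IsParametrization _ (constSeries U) (constSeries V) at h'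
  generalize constSeries U = u, constSeries V = w at h' hXP
  obtain ⟨N, hN⟩ := exists_eq_one_add_mul_add_mul_sq
    (c := w * (1 - u) * C Polynomial.X) (d := u * w * (1 - w) * C Polynomial.X)
    ((h'.X_dvd_right.mul_right _).mul_right _)
    (((h'.X_dvd_left.mul_right _).mul_right _).mul_right _)
  refine ⟨N - u * w * C Polynomial.X * N ^ 2, ?_⟩
  rw [CatalyticEquation]
  simp only [map_sub, map_mul, map_one]
  generalize (C (Polynomial.X : Polynomial A)) = x at hN ⊢
  set F := N - u * w * x * N ^ 2
  linear_combination x * F * (x - 1) * h'.right_eq + x * F ^ 2 * h'.left_eq + x * F * hXP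
    + (u ^ 2 * w * (1 - w) * x ^ 2 * N ^ 2 - x * u * (1 - 2 * w + x * w * (1 - u)) * N
      + (x - 1)) * hN

theorem CatalyticEquation.evalOne_mul_sq {v : A} {F : (Polynomial A)⟦X⟧} {U V : A⟦X⟧}
    (hF : CatalyticEquation v (evalOne F) F) (h : IsParametrization v U V) :
    evalOne F * (1 - V) ^ 2 = 1 - V - U * V := by
  obtain ⟨P, hP⟩ := h.exists_mul_sq_eq
  obtain ⟨G, hG⟩ := exists_catalyticEquation h hP
  obtain rfl := hG.evalOne_eq
  rwa [hF.eq hG]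

end CatalyticEquation

/-! ### Lagrange-Good inversion -/

section Bigraded

variable {R : Type*} [CommRing R]

/-- The series `∑ e i j * t ^ (i + j) * v ^ j`, where `t` is the variable of the power series and
`v` that of the coefficient ring. -/
noncomputable def bigraded : (ℕ → ℕ → R) →+ (Polynomial R)⟦X⟧ where
  toFun e := PowerSeries.mk fun n =>
    ∑ j ∈ Finset.range (n + 1), Polynomial.monomial j (e (n - j) j)
  map_zero' := by ext; simp
  map_add' e e' := by ext; simp [Finset.sum_add_distrib]

theorem coeff_bigraded (e : ℕ → ℕ → R) (i j : ℕ) :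
    (coeff (i + j) (bigraded e)).coeff j = e i j := by
  simp [bigraded, Polynomial.finsetSum_coeff, Polynomial.coeff_monomial]

theorem coeff_bigraded_of_lt (e : ℕ → ℕ → R) {n j : ℕ} (h : n < j) :
    (coeff n (bigraded e)).coeff j = 0 := by
  simp [bigraded, Polynomial.finsetSum_coeff, Polynomial.coeff_monomial, h]

theorem eq_bigraded {f : (Polynomial R)⟦X⟧} {e : ℕ → ℕ → R}
    (h : ∀ i j, (coeff (i + j) f).coeff j = e i j)
    (h' : ∀ n j, n < j → (coeff n f).coeff j = 0) : f = bigraded e := by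
  ext n j
  obtain hj | hj := le_or_gt j n
  · obtain ⟨i, rfl⟩ := Nat.exists_eq_add_of_le' hj
    rw [h, coeff_bigraded]
  · rw [h' n j hj, coeff_bigraded_of_lt e hj]

theorem X_mul_bigraded {e e' : ℕ → ℕ → R} (h₀ : ∀ j, e' 0 j = 0)
    (h : ∀ i j, e' (i + 1) j = e i j) : X * bigraded e = bigraded e' := by
  refine eq_bigraded (fun i j => ?_) fun n j hj => ?_
  · rcases i with - | i
    · rcases j with - | j
      · simp [h₀]
      · rw [zero_add, coeff_succ_X_mul, coeff_bigraded_of_lt e j.lt_succ_self, h₀]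
    · rw [Nat.add_right_comm, coeff_succ_X_mul, coeff_bigraded, h]
  · rcases n with - | n
    · simp
    · rw [coeff_succ_X_mul, coeff_bigraded_of_lt e (by omega)]

theorem X_mul_C_X_mul_bigraded {e e' : ℕ → ℕ → R} (h₀ : ∀ i, e' i 0 = 0)
    (h : ∀ i j, e' i (j + 1) = e i j) :
    X * C Polynomial.X * bigraded e = bigraded e' := by
  rw [mul_assoc]
  refine eq_bigraded (fun i j => ?_) fun n j hj => ?_
  · rcases j with - | j
    · rcases i with - | i
      · simp [h₀]
      · rw [add_zero, coeff_succ_X_mul, coeff_C_mul, Polynomial.coeff_X_mul_zero, h₀]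
    · rw [← add_assoc, coeff_succ_X_mul, coeff_C_mul, Polynomial.coeff_X_mul, coeff_bigraded, h]
  · rcases n with - | n
    · simp
    · obtain ⟨j, rfl⟩ := Nat.exists_eq_add_of_lt hj
      rw [coeff_succ_X_mul, coeff_C_mul, Polynomial.coeff_X_mul,
        coeff_bigraded_of_lt e (by omega)]

theorem bigraded_eq_one {e : ℕ → ℕ → R} (h₀ : e 0 0 = 1)
    (h : ∀ i j, i + j ≠ 0 → e i j = 0) : bigraded e = 1 := by
  refine (eq_bigraded (fun i j => ?_) fun n j hj => ?_).symm
  · by_cases hij : i + j = 0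
    · obtain ⟨rfl, rfl⟩ := Nat.add_eq_zero_iff.1 hij
      simp [h₀]
    · rw [coeff_one, if_neg hij, Polynomial.coeff_zero, h i j hij]
  · rw [coeff_one]
    split_ifs
    · rw [Polynomial.coeff_one, if_neg (by omega)]
    · simp

theorem X_pow_dvd_bigraded {e : ℕ → ℕ → R} {n : ℕ} (h : ∀ i j, i + j < n → e i j = 0) :
    X ^ n ∣ bigraded e := by
  refine X_pow_dvd_iff.2 fun m hm => ?_
  ext j
  obtain hj | hj := le_or_gt j m
  · obtain ⟨i, rfl⟩ := Nat.exists_eq_add_of_le' hj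
    rw [coeff_bigraded, h i j hm, Polynomial.coeff_zero]
  · rw [coeff_bigraded_of_lt e hj, Polynomial.coeff_zero]

end Bigraded

/-- The coefficient of `z ^ j` in `z ^ b * (1 - z) ^ (-p)`. -/
def shiftedMultichoose (p : ℕ) : ℕ → ℕ → ℕ
  | j, 0 => Nat.multichoose p j
  | 0, _ + 1 => 0
  | j + 1, b + 1 => shiftedMultichoose p j b

theorem shiftedMultichoose_of_lt (p : ℕ) : ∀ {j b : ℕ}, j < b → shiftedMultichoose p j b = 0
  | 0, b + 1, _ => by rw [shiftedMultichoose]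
  | j + 1, b + 1, h => by
    rw [shiftedMultichoose, shiftedMultichoose_of_lt p (Nat.lt_of_succ_lt_succ h)]

theorem succ_mul_multichoose_succ (n k : ℕ) :
    (k + 1) * Nat.multichoose n (k + 1) = n * Nat.multichoose (n + 1) k := by
  have h := Nat.choose_succ_right_eq (n + k) k
  rw [Nat.add_sub_cancel] at h
  rw [Nat.multichoose_eq, Nat.multichoose_eq, ← add_assoc, Nat.add_sub_cancel,
    Nat.add_right_comm, Nat.add_sub_cancel]
  linarith

theorem shiftedMultichoose_succ_left (p : ℕ) : ∀ j b : ℕ, shiftedMultichoose (p + 1) j b =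
    shiftedMultichoose p j b + shiftedMultichoose (p + 1) j (b + 1)
  | 0, 0 => by simp [shiftedMultichoose]
  | j + 1, 0 => by simp [shiftedMultichoose, Nat.multichoose_succ_succ]
  | 0, b + 1 => by simp [shiftedMultichoose]
  | j + 1, b + 1 => by simpa [shiftedMultichoose] using shiftedMultichoose_succ_left p j b

/-- This is the differential equation `z df/dz = b f + p z f / (1 - z)` of the series
`f = z ^ b (1 - z) ^ (-p)`. -/
theorem mul_shiftedMultichoose (p : ℕ) : ∀ j b : ℕ, j * shiftedMultichoose p j b =
    b * shiftedMultichoose p j b + p * shiftedMultichoose (p + 1) j (b + 1)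
  | 0, 0 => by simp [shiftedMultichoose]
  | j + 1, 0 => by simp [shiftedMultichoose, succ_mul_multichoose_succ]
  | 0, b + 1 => by simp [shiftedMultichoose]
  | j + 1, b + 1 => by
    have h := mul_shiftedMultichoose p j b
    simp only [shiftedMultichoose]
    linarith

theorem shiftedMultichoose_add_two (p j b : ℕ) : (shiftedMultichoose p j b : ℤ) =
    shiftedMultichoose (p + 2) j b - 2 * shiftedMultichoose (p + 2) j (b + 1) +
      shiftedMultichoose (p + 2) j (b + 2) := by
  rw [shiftedMultichoose_succ_left (p + 1) j b, shiftedMultichoose_succ_left (p + 1) j (b + 1),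
    shiftedMultichoose_succ_left p j b]
  push_cast
  ring

theorem sub_mul_shiftedMultichoose (p j b : ℕ) : ((j : ℤ) - b) * shiftedMultichoose p j b =
    (p + j - b - 1) * shiftedMultichoose p j (b + 1) := by
  have h := mul_shiftedMultichoose p j b
  have h' := mul_shiftedMultichoose p j (b + 1)
  have hpascal := shiftedMultichoose_succ_left p j (b + 1)
  zify at h h' hpascal
  linear_combination h - h' + p * hpascal

/-- The coefficients of the series `baseSeries a b`. -/
def baseCoeff (a b i j : ℕ) : ℤ :=
  shiftedMultichoose (2 * i + 1) j b * shiftedMultichoose (2 * j + 1) i a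

/-- For a parametrization `(U, V)` this is the series `U ^ a * V ^ b / J`, in which
`J = (1 - U) * (1 - V) - 4 * U * V` is the Jacobian factor of the Lagrange-Good formula. -/
noncomputable def baseSeries (a b : ℕ) : (Polynomial ℤ)⟦X⟧ := bigraded (baseCoeff a b)

theorem X_pow_dvd_baseSeries (a b : ℕ) : X ^ (a + b) ∣ baseSeries a b := by
  refine X_pow_dvd_bigraded fun i j hij => ?_
  obtain hj | hi : j < b ∨ i < a := by omega
  · simp [baseCoeff, shiftedMultichoose_of_lt _ hj]
  · simp [baseCoeff, shiftedMultichoose_of_lt _ hi]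

theorem X_mul_baseSeries (a b : ℕ) : X * baseSeries a b =
    baseSeries (a + 1) b - 2 * baseSeries (a + 1) (b + 1) + baseSeries (a + 1) (b + 2) := by
  simp only [baseSeries, two_mul, ← map_add, ← map_sub]
  refine X_mul_bigraded (fun j => ?_) fun i j => ?_
  · simp [baseCoeff, shiftedMultichoose]
  · simp only [Pi.add_apply, Pi.sub_apply, baseCoeff, shiftedMultichoose]
    rw [shiftedMultichoose_add_two (2 * i + 1)]
    ring_nf

theorem X_mul_C_X_mul_baseSeries (a b : ℕ) : X * C Polynomial.X * baseSeries a b =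
    baseSeries a (b + 1) - 2 * baseSeries (a + 1) (b + 1) + baseSeries (a + 2) (b + 1) := by
  simp only [baseSeries, two_mul, ← map_add, ← map_sub]
  refine X_mul_C_X_mul_bigraded (fun i => ?_) fun i j => ?_
  · simp [baseCoeff, shiftedMultichoose]
  · simp only [Pi.add_apply, Pi.sub_apply, baseCoeff, shiftedMultichoose]
    rw [shiftedMultichoose_add_two (2 * j + 1)]
    ring_nf

/-- The two recurrences are those of `U ^ a * V ^ b` for a parametrization `(U, V)`. They determine
each entry modulo `X ^ (n + 1)` from entries modulo `X ^ n` and from entries with larger `a + b`. -/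
theorem eq_zero_of_recurrence {A : Type*} [CommRing A] {c : A⟦X⟧} {D : ℕ → ℕ → A⟦X⟧}
    (h₀ : D 0 0 = 0) (hdvd : ∀ a b, X ^ (a + b) ∣ D a b)
    (hleft : ∀ a b, X * D a b = D (a + 1) b - 2 * D (a + 1) (b + 1) + D (a + 1) (b + 2))
    (hright : ∀ a b, X * c * D a b = D a (b + 1) - 2 * D (a + 1) (b + 1) + D (a + 2) (b + 1))
    (a b : ℕ) : D a b = 0 := by
  refine eq_zero_of_forall_X_pow_dvd fun n => ?_
  induction n generalizing a b with
  | zero => simp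
  | succ n ih =>
    have hstep {x y z : A⟦X⟧} (hx : X ^ n ∣ x) (hy : X ^ (n + 1) ∣ y) (hz : X ^ (n + 1) ∣ z) :
        X ^ (n + 1) ∣ X * x + 2 * y - z := by
      have hXx : X ^ (n + 1) ∣ X * x := pow_succ' (X : A⟦X⟧) n ▸ mul_dvd_mul_left X hx
      exact (hXx.add (hy.mul_left 2)).sub hz
    have hdesc : ∀ k a b, n + 1 ≤ a + b + k → X ^ (n + 1) ∣ D a b := by
      intro k
      induction k with
      | zero => exact fun a b hab => (pow_dvd_pow X hab).trans (hdvd a b)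
      | succ k ihk =>
        rintro (- | a) b hab
        · rcases b with - | b
          · simp [h₀]
          · rw [show D 0 (b + 1) = X * (c * D 0 b) + 2 * D 1 (b + 1) - D 2 (b + 1) by
              linear_combination -hright 0 b]
            exact hstep ((ih 0 b).mul_left c) (ihk _ _ (by omega)) (ihk _ _ (by omega))
        · rw [show D (a + 1) b = X * D a b + 2 * D (a + 1) (b + 1) - D (a + 1) (b + 2) by
            linear_combination -hleft a b]
          exact hstep (ih a b) (ihk _ _ (by omega)) (ihk _ _ (by omega))
    exact hdesc (n + 1) a b (by omega)

section Lagrange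

variable {U V : (Polynomial ℤ)⟦X⟧}

theorem IsParametrization.baseSeries_eq (h : IsParametrization Polynomial.X U V) (a b : ℕ) :
    baseSeries a b = U ^ a * V ^ b * baseSeries 0 0 := by
  refine sub_eq_zero.1 (eq_zero_of_recurrence (c := C Polynomial.X)
    (D := fun a b => baseSeries a b - U ^ a * V ^ b * baseSeries 0 0) (by simp)
    (fun a b => ?_) (fun a b => ?_) (fun a b => ?_) a b)
  · refine (X_pow_dvd_baseSeries a b).sub (Dvd.dvd.mul_right ?_ _)
    rw [pow_add]
    exact mul_dvd_mul (pow_dvd_pow_of_dvd h.X_dvd_left a) (pow_dvd_pow_of_dvd h.X_dvd_right b)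
  · linear_combination X_mul_baseSeries a b + U ^ a * V ^ b * baseSeries 0 0 * h.left_eq
  · linear_combination X_mul_C_X_mul_baseSeries a b + U ^ a * V ^ b * baseSeries 0 0 * h.right_eq

/-- The coefficients of `U ^ a * V ^ b` for a parametrization `(U, V)`. -/
def lagrangeCoeff (a b i j : ℕ) : ℤ :=
  shiftedMultichoose (2 * i) j b * shiftedMultichoose (2 * j) i a -
    4 * baseCoeff (a + 1) (b + 1) i j

theorem bigraded_lagrangeCoeff (a b : ℕ) : bigraded (lagrangeCoeff a b) =
    baseSeries a b - baseSeries (a + 1) b - baseSeries a (b + 1) + baseSeries (a + 1) (b + 1) -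
      4 * baseSeries (a + 1) (b + 1) := by
  rw [show (4 : (Polynomial ℤ)⟦X⟧) = (4 : ℕ) by norm_num, ← nsmul_eq_mul]
  simp only [baseSeries, ← map_nsmul, ← map_add, ← map_sub]
  congr 1
  ext i j
  have hi := shiftedMultichoose_succ_left (2 * i) j b
  have hj := shiftedMultichoose_succ_left (2 * j) i a
  zify at hi hj
  simp only [lagrangeCoeff, baseCoeff, Pi.add_apply, Pi.sub_apply, Pi.smul_apply]
  simp only [nsmul_eq_mul, Nat.cast_ofNat]
  linear_combination -(shiftedMultichoose (2 * j) i a : ℤ) * hi -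
    (shiftedMultichoose (2 * i + 1) j b - shiftedMultichoose (2 * i + 1) j (b + 1) : ℤ) * hj

theorem mul_lagrangeCoeff (a b i j : ℕ) : i * j * lagrangeCoeff a b i j = (a * j + b * i - a * b) *
    (shiftedMultichoose (2 * i) j b * shiftedMultichoose (2 * j) i a) := by
  have hi := mul_shiftedMultichoose (2 * i) j b
  have hj := mul_shiftedMultichoose (2 * j) i a
  zify at hi hj
  simp only [lagrangeCoeff, baseCoeff]
  linear_combination (i - a) * (shiftedMultichoose (2 * j) i a : ℤ) * hi +
    2 * i * (shiftedMultichoose (2 * i + 1) j (b + 1) : ℤ) * hj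

theorem bigraded_lagrangeCoeff_zero_zero : bigraded (lagrangeCoeff 0 0) = 1 := by
  refine bigraded_eq_one (by simp [lagrangeCoeff, baseCoeff, shiftedMultichoose]) fun i j hij => ?_
  rcases i with - | i
  · obtain ⟨j, rfl⟩ := Nat.exists_eq_succ_of_ne_zero (by simpa using hij)
    simp [lagrangeCoeff, baseCoeff, shiftedMultichoose]
  · rcases j with - | j
    · simp [lagrangeCoeff, baseCoeff, shiftedMultichoose]
    · have h := mul_lagrangeCoeff 0 0 (i + 1) (j + 1)
      simp only [Nat.cast_zero, zero_mul, add_zero, sub_zero] at h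
      exact (mul_eq_zero.1 h).resolve_left (by positivity)

/-- The Lagrange-Good inversion formula. -/
theorem IsParametrization.pow_mul_pow_eq (h : IsParametrization Polynomial.X U V) (a b : ℕ) :
    U ^ a * V ^ b = bigraded (lagrangeCoeff a b) := by
  have hfactor : bigraded (lagrangeCoeff a b) = U ^ a * V ^ b * bigraded (lagrangeCoeff 0 0) := by
    simp only [bigraded_lagrangeCoeff]
    rw [h.baseSeries_eq a b, h.baseSeries_eq (a + 1) b, h.baseSeries_eq a (b + 1),
      h.baseSeries_eq (a + 1) (b + 1), h.baseSeries_eq (0 + 1) 0, h.baseSeries_eq 0 (0 + 1),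
      h.baseSeries_eq (0 + 1) (0 + 1)]
    ring
  rw [hfactor, bigraded_lagrangeCoeff_zero_zero, mul_one]

theorem IsParametrization.mul_coeff_mul_one_sub (h : IsParametrization Polynomial.X U V)
    (i j : ℕ) : (i : ℤ) * j * (coeff (i + j) (U * V * (1 - U - V))).coeff j =
      shiftedMultichoose (2 * i) j 1 * shiftedMultichoose (2 * j) i 1 := by
  have hexpand : U * V * (1 - U - V) = bigraded (lagrangeCoeff 1 1) - bigraded (lagrangeCoeff 2 1) -
      bigraded (lagrangeCoeff 1 2) := by
    simp only [← h.pow_mul_pow_eq]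
    ring
  have hi := sub_mul_shiftedMultichoose (2 * i) j 1
  have hj := sub_mul_shiftedMultichoose (2 * j) i 1
  simp only [hexpand, map_sub, Polynomial.coeff_sub, coeff_bigraded, mul_sub, mul_lagrangeCoeff]
  push_cast at hi hj ⊢
  linear_combination (shiftedMultichoose (2 * j) i 1 : ℤ) * hi +
    (shiftedMultichoose (2 * i) j 1 : ℤ) * hj

end Lagrange

end TamariSeries

namespace BT

open PowerSeries TamariSeries

/-! ### Generating functions of synchronized intervals -/

/-- The number of zeros of the canopy. -/
def zeros (T : BT) : ℕ := (canopy T).count 0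

/-- The monomial marking the zeros of the canopy by the variable of the inner polynomial ring and
the length of the left branch by the catalytic variable, that of the outer polynomial ring. -/
noncomputable def weight (T : BT) : Polynomial (Polynomial ℤ) :=
  .C (.X ^ T.zeros) * .X ^ T.leftDepth

/-- The contribution of the second factor `B` to the total weight of the grafts onto `B` at the
depths that preserve synchronization. -/
noncomputable def graftWeight (B : BT) : Polynomial (Polynomial ℤ) :=
  ∑ d ∈ Finset.range B.graftDepths, .C (.X ^ (canopyAux 0 B).count 0) * .X ^ d

/-- The generating function of synchronized intervals by size, zeros of the canopy, and length of
the left branch of the lower tree. -/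
noncomputable def catalyticSeries : (Polynomial (Polynomial ℤ))⟦X⟧ :=
  PowerSeries.mk fun n => ∑ p ∈ syncIntervals n, p.1.weight

/-- The generating function of the second factors in the decomposition of synchronized
intervals. -/
noncomputable def graftSeries : (Polynomial (Polynomial ℤ))⟦X⟧ :=
  PowerSeries.mk fun n => ∑ p ∈ syncIntervals n, p.1.graftWeight

/-- The generating function of synchronized intervals by size and zeros of the canopy. -/
noncomputable def countSeries : (Polynomial ℤ)⟦X⟧ :=
  PowerSeries.mk fun n => ∑ p ∈ syncIntervals n, .X ^ p.1.zeros

theorem evalOne_catalyticSeries : evalOne catalyticSeries = countSeries := by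
  ext1 n
  simp [evalOne, catalyticSeries, countSeries, weight]

theorem zeros_graft (A : BT) {B : BT} {d : ℕ} (h : d < B.graftDepths) :
    (graft A B d).zeros = A.zeros + (canopyAux 0 B).count 0 := by
  simp [zeros, canopy, canopyAux_graft_of_lt 1 A h]

theorem sum_weight_graft (A B : BT) : ∑ d ∈ Finset.range B.graftDepths, (graft A B d).weight =
    .X * A.weight * B.graftWeight := by
  rw [graftWeight, Finset.mul_sum]
  refine Finset.sum_congr rfl fun d hd => ?_
  rw [Finset.mem_range] at hd
  simp only [weight, zeros_graft A hd, leftDepth_graft A (le_leftDepth_of_lt_graftDepths hd),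
    pow_add, map_mul]
  ring

theorem X_sub_one_mul_graftWeight_leaf :
    (.X - 1) * graftWeight leaf = .C .X * (.X - 1) := by
  rw [mul_comm]
  simp [graftWeight, graftDepths, leftDepth, canopyAux]

theorem X_sub_one_mul_graftWeight_node (l r : BT) :
    (.X - 1) * (node l r).graftWeight = (node l r).weight - .C (.X ^ (node l r).zeros) := by
  have hdepths : (node l r).graftDepths = (node l r).leftDepth := by simp [graftDepths, leftDepth]
  rw [graftWeight, ← Finset.mul_sum, mul_left_comm, mul_geom_sum, hdepths, weight, zeros, canopy,
    canopyAux, canopyAux]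
  ring

theorem C_X_sub_one_mul_graftSeries : C (.X - 1) * graftSeries =
    C (.C .X * (.X - 1)) + catalyticSeries - constSeries countSeries := by
  ext1 n
  rw [coeff_C_mul, map_sub (coeff n), map_add, coeff_C, constSeries, coeff_map, graftSeries,
    catalyticSeries, countSeries, coeff_mk, coeff_mk, coeff_mk, map_sum, add_sub_assoc,
    ← Finset.sum_sub_distrib, Finset.mul_sum]
  rcases n with - | n
  · simp [syncIntervals_zero, X_sub_one_mul_graftWeight_leaf, weight, zeros, canopy, canopyAux,
      leftDepth]
  · rw [if_neg n.succ_ne_zero, zero_add]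
    refine Finset.sum_congr rfl fun p hp => ?_
    obtain ⟨leaf | ⟨l, r⟩, T⟩ := p
    · simp [mem_syncIntervals, size] at hp
    · exact X_sub_one_mul_graftWeight_node l r

theorem catalyticSeries_eq :
    catalyticSeries = 1 + X * (C .X * catalyticSeries * graftSeries) := by
  ext1 n
  rcases n with - | n
  · simp [catalyticSeries, syncIntervals_zero, weight, zeros, canopy, canopyAux, leftDepth]
  · rw [map_add, coeff_one, if_neg n.succ_ne_zero, zero_add, coeff_succ_X_mul, mul_assoc,
      coeff_C_mul, coeff_mul]
    simp only [catalyticSeries, graftSeries, coeff_mk, sum_syncIntervals_succ, build,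
      sum_weight_graft]
    rw [Finset.mul_sum]
    refine Finset.sum_congr rfl fun mr _ => ?_
    rw [Finset.sum_mul_sum, ← Finset.sum_product', Finset.mul_sum]
    exact Finset.sum_congr rfl fun _ _ => mul_assoc ..

theorem catalyticEquation_catalyticSeries :
    CatalyticEquation .X (evalOne catalyticSeries) catalyticSeries := by
  rw [CatalyticEquation, evalOne_catalyticSeries, ← C_X_sub_one_mul_graftSeries]
  linear_combination C (.X - 1) * catalyticSeries_eq

theorem X_mul_countSeries_sub_one {U V : (Polynomial ℤ)⟦X⟧} (h : IsParametrization .X U V) :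
    X * (countSeries - 1) = U * V * (1 - U - V) := by
  have hcount := catalyticEquation_catalyticSeries.evalOne_mul_sq h
  rw [evalOne_catalyticSeries] at hcount
  linear_combination U * hcount - (countSeries - 1) * h.left_eq

theorem coeff_countSeries (n j : ℕ) : (coeff n countSeries).coeff j =
    (Set.ncard {p : BT × BT | IsSyncInterval p ∧ p.1.size = n ∧ p.1.zeros = j} : ℤ) := by
  have hset : {p : BT × BT | IsSyncInterval p ∧ p.1.size = n ∧ p.1.zeros = j} =
      ↑{p ∈ syncIntervals n | p.1.zeros = j} := by
    ext p
    simp [mem_syncIntervals, and_assoc]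
  rw [hset, Set.ncard_coe_finset, Finset.card_filter]
  simp [countSeries, Polynomial.finsetSum_coeff, Polynomial.coeff_X_pow, eq_comm]

theorem mul_coeff_countSeries (i j : ℕ) :
    ((i + 1 : ℕ) : ℤ) * (j + 1 : ℕ) * (coeff (i + j + 1) countSeries).coeff (j + 1) =
      Nat.multichoose (2 * (i + 1)) j * Nat.multichoose (2 * (j + 1)) i := by
  obtain ⟨U, V, hUV⟩ := exists_isParametrization (Polynomial.X : Polynomial ℤ)
  have h := hUV.mul_coeff_mul_one_sub (i + 1) (j + 1)
  rw [← X_mul_countSeries_sub_one hUV, show i + 1 + (j + 1) = i + j + 1 + 1 by ring,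
    coeff_succ_X_mul, map_sub, coeff_one, if_neg (i + j).succ_ne_zero, sub_zero] at h
  simpa only [shiftedMultichoose] using h

theorem setOf_synced_eq {i j : ℕ} : {p : BT × BT | isInt p ∧ synced p ∧
      (canopy p.1).count 1 = i + 1 ∧ (canopy p.1).count 0 = j + 1} =
    {p : BT × BT | IsSyncInterval p ∧ p.1.size = i + j + 1 ∧ p.1.zeros = j + 1} := by
  ext p
  have hcount := count_one_add_count_zero_canopyAux (b := 1) p.1 (.inr rfl)
  simp only [Set.mem_ofPred_eq, IsSyncInterval, zeros, and_assoc, canopy]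
  refine and_congr_right fun _ => and_congr_right fun _ => ?_
  omega

end BT

theorem count_synchronized_intervals_bivariate (i j : ℕ) (hi : 1 ≤ i) (hj : 1 ≤ j) :
    i * j * Set.ncard {p : BT × BT | BT.isInt p ∧ BT.synced p ∧
        (BT.canopy p.1).count 1 = i ∧ (BT.canopy p.1).count 0 = j} =
      Nat.choose (2 * i + j - 2) (j - 1) * Nat.choose (2 * j + i - 2) (i - 1) := by
  obtain ⟨i, rfl⟩ := Nat.exists_eq_add_of_le' hi
  obtain ⟨j, rfl⟩ := Nat.exists_eq_add_of_le' hj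
  have h := BT.mul_coeff_countSeries i j
  rw [BT.coeff_countSeries, ← BT.setOf_synced_eq, Nat.multichoose_eq, Nat.multichoose_eq] at h
  exact_mod_cast h
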